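/- arXiv:2409.18442 — 12 statements merged into one kernel-verified Lean document; each statement's English description precedes it below -/
import Mathlib

section
/- Under the forward-step iteration with cocoercivity-type condition, the residuals tend to zero: T(z^k) → 0 as k → ∞ (i.e., the sequence k ↦ T(z^k) tends to 0 in H). (Theorem 1, first conclusion.) -/
/-!
The squared distance to `zstar` is a Lyapunov function: expanding the square and using the
cocoercivity-type bound, each step decreases it by at least `ρ * (2 * β - ρ) * ‖T (z k)‖ ^ 2`,
where `ρ * (2 * β - ρ) > 0`. Telescoping, the squared residuals are summable, hence tend to zero.
-/

open RealInnerProductSpace Filter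

/-- Theorem 1, first conclusion: under the forward-step iteration with
cocoercivity-type condition, the residuals tend to zero: `T (z k) → 0`. -/
theorem forward_step_residuals_tendsto_zero
    {H : Type*} [NormedAddCommGroup H] [InnerProductSpace ℝ H]
    (T : H → H) (β ρ : ℝ) (hβ : 0 < β) (hρ0 : 0 < ρ) (hρ2β : ρ < 2 * β)
    (zstar : H) (hzstar : T zstar = 0)
    (z : ℕ → H)
    (hiter : ∀ k : ℕ, z (k + 1) = z k - ρ • T (z k))
    (hcoco : ∀ k : ℕ, β * ‖T (z k)‖ ^ 2 ≤ ⟪T (z k), z k - zstar⟫) :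
    Tendsto (fun k => T (z k)) atTop (nhds (0 : H)) := by
  -- Fejér-type descent: expand the square and use `hcoco` on the cross term.
  have hdesc : ∀ k, ρ * (2 * β - ρ) * ‖T (z k)‖ ^ 2
      ≤ ‖z k - zstar‖ ^ 2 - ‖z (k + 1) - zstar‖ ^ 2 := by
    intro k
    have hsub : z (k + 1) - zstar = (z k - zstar) - ρ • T (z k) := by
      rw [hiter k]; abel
    have hexp := norm_sub_sq_real (z k - zstar) (ρ • T (z k))
    rw [← hsub, real_inner_smul_right, real_inner_comm, norm_smul, mul_pow,
      Real.norm_eq_abs, sq_abs] at hexp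
    have hmul := mul_le_mul_of_nonneg_left (hcoco k) hρ0.le
    linarith
  have hc : 0 < ρ * (2 * β - ρ) := mul_pos hρ0 (by linarith)
  have hsum : Summable fun k => ρ * (2 * β - ρ) * ‖T (z k)‖ ^ 2 := by
    refine summable_of_sum_range_le (c := ‖z 0 - zstar‖ ^ 2) (fun k => by positivity) ?_
    intro n
    calc ∑ k ∈ Finset.range n, ρ * (2 * β - ρ) * ‖T (z k)‖ ^ 2
        ≤ ∑ k ∈ Finset.range n, (‖z k - zstar‖ ^ 2 - ‖z (k + 1) - zstar‖ ^ 2) :=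
          Finset.sum_le_sum fun k _ => hdesc k
      _ = ‖z 0 - zstar‖ ^ 2 - ‖z n - zstar‖ ^ 2 :=
          Finset.sum_range_sub' (fun k => ‖z k - zstar‖ ^ 2) n
      _ ≤ ‖z 0 - zstar‖ ^ 2 := by linarith [sq_nonneg ‖z n - zstar‖]
  have hsq : Tendsto (fun k => ‖T (z k)‖ ^ 2) atTop (nhds 0) :=
    ((summable_mul_left_iff hc.ne').1 hsum).tendsto_atTop_zero
  rw [tendsto_zero_iff_norm_tendsto_zero]
  simpa using hsq.sqrt
end

section
/- Under the forward-step iteration with cocoercivity-type condition, the squared residuals are summable with the explicit bound ρ·(2β − ρ) · Σ_{k=0}^∞ ‖T(z^k)‖² ≤ ‖z^0 − z⋆‖²; in particular the function k ↦ ‖T(z^k)‖² is summable. (Summation step in the proof of Theorem 1.) -/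
/-!
Expanding the square in the iteration and using the cocoercivity-type condition gives the descent
inequality `‖z (k + 1) - z⋆‖² + ρ (2β - ρ) ‖T (z k)‖² ≤ ‖z k - z⋆‖²`. It telescopes, so every
partial sum of the nonnegative terms `‖T (z k)‖²` is at most `‖z 0 - z⋆‖² / (ρ (2β - ρ))`, which
yields both summability and the bound on the sum.
-/

open RealInnerProductSpace Filter

/-- Summation step in Theorem 1: the squared residuals are summable with the
explicit bound `ρ (2β − ρ) ∑ ‖T (z k)‖² ≤ ‖z 0 − z⋆‖²`. -/
theorem forward_step_residuals_summable
    {H : Type*} [NormedAddCommGroup H] [InnerProductSpace ℝ H]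
    (T : H → H) (β ρ : ℝ) (hβ : 0 < β) (hρ0 : 0 < ρ) (hρ2β : ρ < 2 * β)
    (zstar : H) (hzstar : T zstar = 0)
    (z : ℕ → H)
    (hiter : ∀ k : ℕ, z (k + 1) = z k - ρ • T (z k))
    (hcoco : ∀ k : ℕ, β * ‖T (z k)‖ ^ 2 ≤ ⟪T (z k), z k - zstar⟫) :
    Summable (fun k : ℕ => ‖T (z k)‖ ^ 2) ∧
      ρ * (2 * β - ρ) * (∑' k : ℕ, ‖T (z k)‖ ^ 2) ≤ ‖z 0 - zstar‖ ^ 2 := by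
  have hc : 0 < ρ * (2 * β - ρ) := mul_pos hρ0 (by linarith)
  have hstep : ∀ k, ‖z (k + 1) - zstar‖ ^ 2 + ρ * (2 * β - ρ) * ‖T (z k)‖ ^ 2
      ≤ ‖z k - zstar‖ ^ 2 := by
    intro k
    have hexp : ‖z (k + 1) - zstar‖ ^ 2 = ‖z k - zstar‖ ^ 2
        - 2 * (ρ * ⟪T (z k), z k - zstar⟫) + ρ ^ 2 * ‖T (z k)‖ ^ 2 := by
      rw [hiter, sub_right_comm, norm_sub_sq_real, real_inner_smul_right, real_inner_comm,
        norm_smul, mul_pow, Real.norm_eq_abs, sq_abs]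
    have hmul := mul_le_mul_of_nonneg_left (hcoco k) hρ0.le
    linarith
  have htel : ∀ n, ρ * (2 * β - ρ) * ∑ k ∈ Finset.range n, ‖T (z k)‖ ^ 2
      + ‖z n - zstar‖ ^ 2 ≤ ‖z 0 - zstar‖ ^ 2 := by
    intro n
    induction n with
    | zero => simp
    | succ n ih =>
      rw [Finset.sum_range_succ, mul_add]
      linarith [hstep n]
  have hpartial : ∀ n, ∑ k ∈ Finset.range n, ‖T (z k)‖ ^ 2
      ≤ ‖z 0 - zstar‖ ^ 2 / (ρ * (2 * β - ρ)) := by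
    intro n
    rw [le_div_iff₀' hc]
    linarith [htel n, sq_nonneg ‖z n - zstar‖]
  have hnonneg : ∀ k, 0 ≤ ‖T (z k)‖ ^ 2 := fun k => sq_nonneg _
  refine ⟨summable_of_sum_range_le hnonneg hpartial, ?_⟩
  rw [← le_div_iff₀' hc]
  exact Real.tsum_le_of_sum_range_le hnonneg hpartial
end

section
/- Theorem 2(A): under the inertial Krasnoselskii–Mann iteration with cocoercivity-type condition and step-size condition, the three series Σ_{k≥1} ‖z^{k+1} − 2·z^k + z^{k−1}‖², Σ_{k≥1} ‖z^k − z^{k−1}‖², and Σ_{k≥1} ‖T(y^k)‖² all converge (i.e., the corresponding nonnegative sequences are summable). -/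
/-!
Write `a k = ‖z k - zstar‖²`, `D k = ‖z (k+1) - z k‖²`, `E k = ‖z (k+2) - 2 z (k+1) + z k‖²` and
`ν = lam⁻¹ - 1`. Cocoercivity gives
`a (k+2) ≤ ‖y (k+1) - zstar‖² - ν ‖z (k+2) - y (k+1)‖²`. Expanding both norms on the right in terms
of `a`, `D`, `E` shows that the Lyapunov function `μ k = a (k+1) - α a k + ν (1 - α) D k` satisfies
`μ (k+1) + c D k + ν α E k ≤ μ k` with `c = ν (1 - α)² - α (1 + α)`, and the step-size condition
says exactly that `c > 0`. Since `z 0 = z 1`, `μ 0 = (1 - α) a 0`, so `a (k+1) ≤ α a k + (1 - α) a 0`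
and hence `a k ≤ a 0` for all `k`. Thus `μ` is bounded below, and telescoping bounds the partial
sums of `c D + ν α E`. Finally `ρ² ‖T (y (k+1))‖² = ‖z (k+2) - y (k+1)‖²` is at most
`α E k + D (k+1)`.
-/

open RealInnerProductSpace Filter

section
variable {H : Type*} [NormedAddCommGroup H] [InnerProductSpace ℝ H]

lemma norm_sq_extrapolate (α : ℝ) (u v : H) :
    ‖v + α • (v - u)‖ ^ 2 =
      (1 + α) * ‖v‖ ^ 2 - α * ‖u‖ ^ 2 + α * (1 + α) * ‖v - u‖ ^ 2 := by
  rw [norm_add_sq_real, norm_smul, mul_pow, norm_sub_sq_real, inner_smul_right, inner_sub_right,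
    real_inner_self_eq_norm_sq, Real.norm_eq_abs, sq_abs]
  ring

lemma norm_sq_sub_smul (α : ℝ) (p q : H) :
    ‖p - α • q‖ ^ 2 =
      α * ‖p - q‖ ^ 2 + (1 - α) * ‖p‖ ^ 2 - α * (1 - α) * ‖q‖ ^ 2 := by
  rw [norm_sub_sq_real, norm_sub_sq_real, norm_smul, mul_pow, inner_smul_right,
    Real.norm_eq_abs, sq_abs]
  ring

end

/-- A sequence that a Lyapunov function bounded below dissipates is summable. -/
lemma summable_of_lyapunov (f μ : ℕ → ℝ) (B : ℝ) (hf : ∀ k, 0 ≤ f k)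
    (hμ : ∀ k, μ (k + 1) + f k ≤ μ k) (hB : ∀ k, B ≤ μ k) : Summable f := by
  refine summable_of_sum_range_le (c := μ 0 - B) hf fun n => ?_
  have h : ∑ i ∈ Finset.range n, f i ≤ μ 0 - μ n := by
    induction n with
    | zero => simp
    | succ n ih => rw [Finset.sum_range_succ]; linarith [hμ n]
  linarith [hB n]

/-- Theorem 2(A): under the inertial Krasnoselskii–Mann iteration with
cocoercivity-type condition and step-size condition, the three series
`∑_{k≥1} ‖z^{k+1} − 2 z^k + z^{k−1}‖²`, `∑_{k≥1} ‖z^k − z^{k−1}‖²` and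
`∑_{k≥1} ‖T y^k‖²` converge. -/
theorem inertial_KM_summable
    {H : Type*} [NormedAddCommGroup H] [InnerProductSpace ℝ H]
    (α β lam ρ : ℝ) (hα0 : 0 < α) (hα1 : α < 1) (hβ : 0 < β) (hlam : 0 < lam)
    (hρ : ρ = 2 * lam * β)
    (T : H → H) (zstar : H) (hzstar : T zstar = 0)
    (z y : ℕ → H)
    (hy : ∀ k : ℕ, y (k + 1) = z (k + 1) + α • (z (k + 1) - z k))
    (hz : ∀ k : ℕ, z (k + 2) = y (k + 1) - ρ • T (y (k + 1)))
    (hcoco : ∀ k : ℕ, β * ‖T (y (k + 1))‖ ^ 2 ≤ ⟪T (y (k + 1)), y (k + 1) - zstar⟫)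
    (hz01 : z 0 = z 1)
    (hstep : lam * (1 - α + 2 * α ^ 2) < (1 - α) ^ 2) :
    Summable (fun k : ℕ => ‖z (k + 2) - (2 : ℝ) • z (k + 1) + z k‖ ^ 2) ∧
      Summable (fun k : ℕ => ‖z (k + 1) - z k‖ ^ 2) ∧
      Summable (fun k : ℕ => ‖T (y (k + 1))‖ ^ 2) := by
  obtain ⟨a, ha⟩ : ∃ a : ℕ → ℝ, ∀ k, a k = ‖z k - zstar‖ ^ 2 := ⟨_, fun _ => rfl⟩
  obtain ⟨D, hD⟩ : ∃ D : ℕ → ℝ, ∀ k, D k = ‖z (k + 1) - z k‖ ^ 2 := ⟨_, fun _ => rfl⟩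
  obtain ⟨E, hE⟩ : ∃ E : ℕ → ℝ, ∀ k, E k = ‖z (k + 2) - (2 : ℝ) • z (k + 1) + z k‖ ^ 2 :=
    ⟨_, fun _ => rfl⟩
  obtain ⟨S, hS⟩ : ∃ S : ℕ → ℝ, ∀ k, S k = ‖T (y (k + 1))‖ ^ 2 := ⟨_, fun _ => rfl⟩
  simp only [← hD, ← hE, ← hS]
  have ha0 : ∀ k, 0 ≤ a k := fun k => by rw [ha]; positivity
  have hD0 : ∀ k, 0 ≤ D k := fun k => by rw [hD]; positivity
  have hE0 : ∀ k, 0 ≤ E k := fun k => by rw [hE]; positivity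
  have hS0 : ∀ k, 0 ≤ S k := fun k => by rw [hS]; positivity
  have hρ0 : 0 < ρ := by rw [hρ]; positivity
  obtain ⟨ν, hν⟩ : ∃ ν : ℝ, ν = lam⁻¹ - 1 := ⟨_, rfl⟩
  have hlν : lam * ν = 1 - lam := by rw [hν]; field_simp
  have hc : 0 < ν * (1 - α) ^ 2 - α * (1 + α) := by
    refine pos_of_mul_pos_right (a := lam) ?_ hlam.le
    linear_combination hstep - (1 - α) ^ 2 * hlν
  have hν0 : 0 < ν := by
    refine pos_of_mul_pos_left (b := (1 - α) ^ 2) ?_ (sq_nonneg _)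
    nlinarith
  have hresid : ∀ k, ρ ^ 2 * S k = α * E k + (1 - α) * D (k + 1) - α * (1 - α) * D k := by
    intro k
    have h1 : ρ • T (y (k + 1)) = -((z (k + 2) - z (k + 1)) - α • (z (k + 1) - z k)) := by
      rw [hz, hy]; abel
    have h2 : z (k + 2) - (2 : ℝ) • z (k + 1) + z k
        = (z (k + 2) - z (k + 1)) - (z (k + 1) - z k) := by
      rw [two_smul]; abel
    rw [hS, hE, hD, hD, h2, ← norm_sq_sub_smul, ← norm_neg (_ - α • _), ← h1, norm_smul, mul_pow,
      Real.norm_eq_abs, sq_abs]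
  have hdesc : ∀ k, a (k + 2) ≤
      (1 + α) * a (k + 1) - α * a k + α * (1 + α) * D k - ν * (ρ ^ 2 * S k) := by
    intro k
    have h1 : z (k + 2) - zstar = (y (k + 1) - zstar) - ρ • T (y (k + 1)) := by
      rw [hz]; abel
    have h2 : y (k + 1) - zstar
        = (z (k + 1) - zstar) + α • ((z (k + 1) - zstar) - (z k - zstar)) := by
      rw [hy, sub_sub_sub_cancel_right]; abel
    have h3 : ‖y (k + 1) - zstar‖ ^ 2
        = (1 + α) * a (k + 1) - α * a k + α * (1 + α) * D k := by
      rw [h2, norm_sq_extrapolate, sub_sub_sub_cancel_right, ha, ha, hD]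
    have h4 : a (k + 2) = ‖y (k + 1) - zstar‖ ^ 2
        - 2 * ρ * ⟪T (y (k + 1)), y (k + 1) - zstar⟫ + ρ ^ 2 * S k := by
      rw [ha, hS, h1, norm_sub_sq_real, norm_smul, mul_pow, Real.norm_eq_abs, sq_abs,
        inner_smul_right, real_inner_comm]
      ring
    have h5 := mul_le_mul_of_nonneg_left (hcoco k) (by positivity : 0 ≤ 2 * ρ)
    rw [← hS] at h5
    -- `ρ = 2 lam β` turns the cocoercivity term `2 ρ β` into `ρ² / lam = (1 + ν) ρ²`.
    have h6 : 2 * ρ * β = (1 + ν) * ρ ^ 2 := by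
      rw [hρ]; linear_combination (-4 * lam * β ^ 2) * hlν
    have h7 : 2 * ρ * (β * S k) = (1 + ν) * ρ ^ 2 * S k := by rw [← h6]; ring
    linarith
  obtain ⟨μ, hμ⟩ : ∃ μ : ℕ → ℝ, ∀ k, μ k = a (k + 1) - α * a k + ν * (1 - α) * D k :=
    ⟨_, fun _ => rfl⟩
  have hlyap : ∀ k, μ (k + 1) +
      ((ν * (1 - α) ^ 2 - α * (1 + α)) * D k + ν * α * E k) ≤ μ k := by
    intro k
    have h := hdesc k
    rw [hresid] at h
    rw [hμ, hμ]
    linarith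
  have hcD : ∀ k, 0 ≤ (ν * (1 - α) ^ 2 - α * (1 + α)) * D k := fun k =>
    mul_nonneg hc.le (hD0 k)
  have hνE : ∀ k, 0 ≤ ν * α * E k := fun k => mul_nonneg (by positivity) (hE0 k)
  have hνD : ∀ k, 0 ≤ ν * (1 - α) * D k := fun k =>
    mul_nonneg (mul_nonneg hν0.le (by linarith)) (hD0 k)
  have hμ0 : ∀ k, μ k ≤ (1 - α) * a 0 := by
    intro k
    induction k with
    | zero =>
      have h1 : a 1 = a 0 := by rw [ha, ha, hz01]
      have h2 : D 0 = 0 := by rw [hD, hz01]; simp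
      rw [hμ, h2, zero_add, h1]
      linarith
    | succ k ih => linarith [hlyap k, hcD k, hνE k]
  have hbdd : ∀ k, a k ≤ a 0 := by
    intro k
    induction k with
    | zero => exact le_rfl
    | succ k ih =>
      have h := hμ0 k
      rw [hμ] at h
      linarith [hνD k, mul_le_mul_of_nonneg_left ih hα0.le]
  have hsum := summable_of_lyapunov _ μ (-(α * a 0))
    (fun k => add_nonneg (hcD k) (hνE k)) hlyap (fun k => by
      rw [hμ]
      linarith [hνD k, ha0 (k + 1), mul_le_mul_of_nonneg_left (hbdd k) hα0.le])
  have hsD : Summable D := (summable_mul_left_iff hc.ne').1 <|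
    hsum.of_nonneg_of_le hcD fun k => le_add_of_nonneg_right (hνE k)
  have hsE : Summable E := (summable_mul_left_iff (mul_pos hν0 hα0).ne').1 <|
    hsum.of_nonneg_of_le hνE fun k => le_add_of_nonneg_left (hcD k)
  refine ⟨hsE, hsD, (summable_mul_left_iff (pow_pos hρ0 2).ne').1 ?_⟩
  refine ((hsE.mul_left α).add ((summable_nat_add_iff 1).2 hsD)).of_nonneg_of_le
    (fun k => mul_nonneg (sq_nonneg _) (hS0 k)) fun k => ?_
  rw [hresid]
  linarith [mul_nonneg hα0.le (hD0 (k + 1)),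
    mul_nonneg (mul_nonneg hα0.le (sub_nonneg.2 hα1.le)) (hD0 k)]
end

section
/- Theorem 2(B): under the inertial Krasnoselskii–Mann iteration with cocoercivity-type condition and step-size condition, there is a constant M > 0 such that for every n ≥ 1 there exists an index k with 1 ≤ k ≤ n and n · ‖T(y^k)‖² ≤ M · ‖z^1 − z⋆‖² (equivalently, min_{1 ≤ k ≤ n} ‖T(y^k)‖² ≤ M·‖z^1 − z⋆‖²/n). -/
/-!
Write `d k = ‖z k - z⋆‖²` and `g k = ‖z (k+1) - z k‖²`. Cocoercivity and the choice `ρ = 2λβ` give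
`d (k+2) ≤ ‖y (k+1) - z⋆‖² - ν ‖z (k+2) - y (k+1)‖²` with `ν = λ⁻¹ - 1`. Expanding both norms at
`y (k+1) = z (k+1) + α (z (k+1) - z k)`, with Young's inequality for the cross term of the second,
turns this into the scalar recursion
`d (k+2) ≤ (1+α) d (k+1) - α d k + a g k - b g (k+1)`, where `a = α(1+α) + να(1-α)` and
`b = ν(1-α)`; the step-size condition says exactly that `a < b`. Hence the potential
`d (k+1) - α d k + a g k` decreases by at least `(b-a) g (k+1)` at each step. It starts at
`(1-α) d 1`, which forces `d k ≤ d 1` for all `k`, so it never drops below `-α d 1`, and therefore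
`(b-a) ∑ g k ≤ d 1`. Finally `ρ T(y (k+1))` is a combination of two consecutive increments, so
`∑ ‖T (y k)‖²` is bounded by a multiple of `d 1`, and the least of `n` terms is at most their
average.
-/

open RealInnerProductSpace Filter

/-- The potential `d (k+1) - α d k + a g k` may be negative; carrying `d k ≤ d 1` through the same
induction supplies its lower bound `-α d 1`. -/
lemma sum_increments_le {α a b : ℝ} (hα0 : 0 ≤ α) (ha : 0 ≤ a) (hab : a ≤ b) {d g : ℕ → ℝ}
    (hd : ∀ k, 0 ≤ d k) (hg : ∀ k, 0 ≤ g k) (hd01 : d 0 = d 1) (hg0 : g 0 = 0)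
    (hrec : ∀ k, d (k + 2) ≤ (1 + α) * d (k + 1) - α * d k + a * g k - b * g (k + 1)) (n : ℕ) :
    (b - a) * ∑ i ∈ Finset.range n, g (i + 1) ≤ d 1 := by
  have key : (b - a) * ∑ i ∈ Finset.range n, g (i + 1) + (d (n + 1) - α * d n + a * g n)
      ≤ (1 - α) * d 1 ∧ d n ≤ d 1 := by
    induction n with
    | zero =>
      refine ⟨?_, hd01.le⟩
      simp only [Finset.range_zero, Finset.sum_empty, hg0, hd01, zero_add]
      linarith
    | succ n ih =>
      obtain ⟨h1, h2⟩ := ih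
      refine ⟨?_, ?_⟩
      · rw [Finset.sum_range_succ]
        linarith [hrec n]
      · have hS : 0 ≤ (b - a) * ∑ i ∈ Finset.range n, g (i + 1) :=
          mul_nonneg (sub_nonneg.2 hab) (Finset.sum_nonneg fun i _ => hg _)
        linarith [mul_le_mul_of_nonneg_left h2 hα0, mul_nonneg ha (hg n)]
  linarith [mul_le_mul_of_nonneg_left key.2 hα0, mul_nonneg ha (hg n), hd (n + 1)]

/-- One step of the iteration: here `p = zᵏ⁻¹ - z⋆`, `q = zᵏ - z⋆`, `r = zᵏ⁺¹ - z⋆`, and `t` is the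
value of `T` at `yᵏ`, so that `yᵏ - z⋆ = q + α • (q - p)`. -/
lemma energy_step {H : Type*} [NormedAddCommGroup H] [InnerProductSpace ℝ H]
    {α β lam : ℝ} (hα0 : 0 ≤ α) (hlam : 0 < lam) (hlam1 : lam ≤ 1) {p q r t : H}
    (hr : r = q + α • (q - p) - (2 * lam * β) • t)
    (hcoco : β * ‖t‖ ^ 2 ≤ ⟪t, q + α • (q - p)⟫) (hβ : 0 < β) :
    ‖r‖ ^ 2 ≤ (1 + α) * ‖q‖ ^ 2 - α * ‖p‖ ^ 2
      + (α * (1 + α) + (lam⁻¹ - 1) * (α * (1 - α))) * ‖q - p‖ ^ 2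
      - (lam⁻¹ - 1) * (1 - α) * ‖r - q‖ ^ 2 := by
  have hν : 0 ≤ lam⁻¹ - 1 := sub_nonneg.2 ((one_le_inv₀ hlam).2 hlam1)
  have hw : ‖q + α • (q - p)‖ ^ 2
      = (1 + α) * ‖q‖ ^ 2 - α * ‖p‖ ^ 2 + α * (1 + α) * ‖q - p‖ ^ 2 := by
    simp only [← real_inner_self_eq_norm_sq, inner_add_left, inner_add_right, inner_sub_left,
      inner_sub_right, real_inner_smul_left, real_inner_smul_right, real_inner_comm p q]
    ring
  have hr2 : ‖r‖ ^ 2 = ‖q + α • (q - p)‖ ^ 2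
      - 2 * (2 * lam * β) * ⟪t, q + α • (q - p)⟫ + (2 * lam * β) ^ 2 * ‖t‖ ^ 2 := by
    rw [hr, norm_sub_sq_real, real_inner_smul_right, norm_smul, mul_pow, Real.norm_eq_abs, sq_abs,
      real_inner_comm]
    ring
  have hdesc : ‖r‖ ^ 2 ≤ ‖q + α • (q - p)‖ ^ 2
      - (lam⁻¹ - 1) * ((2 * lam * β) ^ 2 * ‖t‖ ^ 2) := by
    have h := mul_le_mul_of_nonneg_left hcoco (by positivity : 0 ≤ 2 * (2 * lam * β))
    have e : (lam⁻¹ - 1) * ((2 * lam * β) ^ 2 * ‖t‖ ^ 2)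
        = 2 * (2 * lam * β) * (β * ‖t‖ ^ 2) - (2 * lam * β) ^ 2 * ‖t‖ ^ 2 := by
      field_simp
    rw [hr2, e]
    linarith
  have hincr : (1 - α) * ‖r - q‖ ^ 2 - α * (1 - α) * ‖q - p‖ ^ 2
      ≤ (2 * lam * β) ^ 2 * ‖t‖ ^ 2 := by
    have e : (2 * lam * β) • t = α • (q - p) - (r - q) := by rw [hr]; abel
    have e2 : (2 * lam * β) ^ 2 * ‖t‖ ^ 2
        = α ^ 2 * ‖q - p‖ ^ 2 - 2 * (α * ⟪q - p, r - q⟫) + ‖r - q‖ ^ 2 := by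
      rw [← sq_abs (2 * lam * β), ← Real.norm_eq_abs, ← mul_pow, ← norm_smul, e, norm_sub_sq_real,
        real_inner_smul_left, norm_smul, mul_pow, Real.norm_eq_abs, sq_abs]
    have e3 : 2 * ⟪q - p, r - q⟫ ≤ ‖q - p‖ ^ 2 + ‖r - q‖ ^ 2 := by
      have h := norm_sub_sq_real (q - p) (r - q)
      linarith [sq_nonneg ‖q - p - (r - q)‖]
    rw [e2]
    linarith [mul_le_mul_of_nonneg_left e3 hα0]
  linarith [mul_le_mul_of_nonneg_left hincr hν]

/-- Theorem 2(B): there is a constant `M > 0` such that for every `n ≥ 1`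
there is `1 ≤ k ≤ n` with `n ‖T y^k‖² ≤ M ‖z^1 − z⋆‖²`. -/
theorem inertial_KM_min_residual_bound
    {H : Type*} [NormedAddCommGroup H] [InnerProductSpace ℝ H]
    (α β lam ρ : ℝ) (hα0 : 0 < α) (hα1 : α < 1) (hβ : 0 < β) (hlam : 0 < lam)
    (hρ : ρ = 2 * lam * β)
    (T : H → H) (zstar : H) (hzstar : T zstar = 0)
    (z y : ℕ → H)
    (hy : ∀ k : ℕ, y (k + 1) = z (k + 1) + α • (z (k + 1) - z k))
    (hz : ∀ k : ℕ, z (k + 2) = y (k + 1) - ρ • T (y (k + 1)))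
    (hcoco : ∀ k : ℕ, β * ‖T (y (k + 1))‖ ^ 2 ≤ ⟪T (y (k + 1)), y (k + 1) - zstar⟫)
    (hz01 : z 0 = z 1)
    (hstep : lam * (1 - α + 2 * α ^ 2) < (1 - α) ^ 2) :
    ∃ M : ℝ, 0 < M ∧ ∀ n : ℕ, 1 ≤ n →
      ∃ k : ℕ, 1 ≤ k ∧ k ≤ n ∧ (n : ℝ) * ‖T (y k)‖ ^ 2 ≤ M * ‖z 1 - zstar‖ ^ 2 := by
  have hlam1 : lam < 1 := by
    by_contra! h
    nlinarith [mul_le_mul_of_nonneg_right h (by nlinarith : 0 ≤ 1 - α + 2 * α ^ 2)]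
  have hν : 0 < lam⁻¹ - 1 := sub_pos.2 ((one_lt_inv₀ hlam).2 hlam1)
  set a : ℝ := α * (1 + α) + (lam⁻¹ - 1) * (α * (1 - α)) with ha_def
  set b : ℝ := (lam⁻¹ - 1) * (1 - α) with hb_def
  have h1α : 0 < 1 - α := sub_pos.2 hα1
  have ha : 0 ≤ a := by positivity
  have hab : 0 < b - a := by
    have e : b - a = lam⁻¹ * ((1 - α) ^ 2 - lam * (1 - α + 2 * α ^ 2)) := by
      rw [ha_def, hb_def]
      field_simp
      ring
    rw [e]
    exact mul_pos (inv_pos.2 hlam) (sub_pos.2 hstep)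
  have hρ0 : 0 < ρ := by rw [hρ]; positivity
  have hsum := sum_increments_le (d := fun k => ‖z k - zstar‖ ^ 2)
    (g := fun k => ‖z (k + 1) - z k‖ ^ 2) hα0.le ha (sub_pos.1 hab).le
    (fun _ => by positivity) (fun _ => by positivity) (by simp [hz01]) (by simp [hz01])
    (fun k => by
      have hyk : y (k + 1) - zstar = (z (k + 1) - zstar)
          + α • ((z (k + 1) - zstar) - (z k - zstar)) := by
        rw [hy, sub_sub_sub_cancel_right]; abel
      have h := energy_step (p := z k - zstar) (q := z (k + 1) - zstar) (r := z (k + 2) - zstar)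
        hα0.le hlam hlam1.le (by rw [← hyk, hz, hρ]; abel) (hyk ▸ hcoco k) hβ
      simpa only [sub_sub_sub_cancel_right] using h)
  -- The residual at `y (k + 1)` is controlled by two consecutive increments.
  have hres : ∀ k, ρ ^ 2 * ‖T (y (k + 1))‖ ^ 2
      ≤ 2 * ‖z (k + 1) - z k‖ ^ 2 + 2 * ‖z (k + 2) - z (k + 1)‖ ^ 2 := by
    intro k
    have e : ρ • T (y (k + 1)) = α • (z (k + 1) - z k) - (z (k + 2) - z (k + 1)) := by
      rw [hz k]
      nth_rewrite 2 [hy k]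
      abel
    have h : ρ * ‖T (y (k + 1))‖ ≤ ‖z (k + 1) - z k‖ + ‖z (k + 2) - z (k + 1)‖ := by
      calc ρ * ‖T (y (k + 1))‖ = ‖ρ • T (y (k + 1))‖ := by
            rw [norm_smul, Real.norm_of_nonneg hρ0.le]
        _ ≤ ‖α • (z (k + 1) - z k)‖ + ‖z (k + 2) - z (k + 1)‖ := e ▸ norm_sub_le _ _
        _ ≤ _ := by
            rw [norm_smul, Real.norm_of_nonneg hα0.le]
            gcongr
            exact mul_le_of_le_one_left (norm_nonneg _) hα1.le
    have h2 := pow_le_pow_left₀ (by positivity) h 2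
    rw [mul_pow] at h2
    linarith [add_sq_le (a := ‖z (k + 1) - z k‖) (b := ‖z (k + 2) - z (k + 1)‖)]
  refine ⟨4 / ((b - a) * ρ ^ 2), by positivity, fun n hn => ?_⟩
  have hS := hsum n
  simp only [add_assoc, one_add_one_eq_two] at hS
  -- Since `z 0 = z 1`, the sum of the earlier increments is dominated by that of the later ones.
  have hshift : ∑ i ∈ Finset.range n, ‖z (i + 1) - z i‖ ^ 2
      ≤ ∑ i ∈ Finset.range n, ‖z (i + 2) - z (i + 1)‖ ^ 2 := by
    have h := (Finset.sum_range_succ' (fun i => ‖z (i + 1) - z i‖ ^ 2) n).symm.trans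
      (Finset.sum_range_succ (fun i => ‖z (i + 1) - z i‖ ^ 2) n)
    simp only [add_assoc, one_add_one_eq_two, zero_add, hz01, sub_self, norm_zero] at h
    have hnn := sq_nonneg ‖z (n + 1) - z n‖
    linarith
  have htot : ∑ i ∈ Finset.range n, ‖T (y (i + 1))‖ ^ 2
      ≤ 4 / ((b - a) * ρ ^ 2) * ‖z 1 - zstar‖ ^ 2 := by
    have h := Finset.sum_le_sum fun i (_ : i ∈ Finset.range n) => hres i
    rw [Finset.sum_add_distrib, ← Finset.mul_sum, ← Finset.mul_sum, ← Finset.mul_sum] at h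
    rw [div_mul_eq_mul_div, le_div_iff₀ (by positivity)]
    have h' := mul_le_mul_of_nonneg_left (h.trans (by linarith :
      _ ≤ 4 * ∑ i ∈ Finset.range n, ‖z (i + 2) - z (i + 1)‖ ^ 2)) hab.le
    linarith
  obtain ⟨i, hi, hle⟩ := Finset.exists_min_image (Finset.range n)
    (fun i => ‖T (y (i + 1))‖ ^ 2) ⟨0, Finset.mem_range.2 hn⟩
  refine ⟨i + 1, by omega, Finset.mem_range.1 hi, le_trans ?_ htot⟩
  simpa using Finset.card_nsmul_le_sum _ _ _ hle
end

section
/- Theorem 2(C): under the inertial Krasnoselskii–Mann iteration with cocoercivity-type condition and step-size condition, the limit lim_{k→∞} ‖z^k − z⋆‖ exists, i.e., there is a real number L ≥ 0 with ‖z^k − z⋆‖ → L as k → ∞. -/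
/-!
Write `C k = ‖z k - zstar‖²`, `Δ k = ‖z (k+1) - z k‖²` and `ν = λ⁻¹ - 1`. Expanding the squared norms,
cocoercivity and `2⟪z (k+2) - z (k+1), z (k+1) - z k⟫ ≤ Δ (k+1) + Δ k` give (`inertial_energy_step`)

  `C (k+2) - α C (k+1) + b Δ (k+1) ≤ C (k+1) - α C k + a Δ k`,

with `a = α (1 + α) + ν α (1 - α)` and `b = ν (1 - α)`. The step-size condition is exactly `a < b`,
so the energy `E k = C (k+1) - α C k + a Δ k` decreases by at least `(b - a) Δ (k+1)`. As
`E 0 = (1 - α) C 0`, the bound `C (k+1) ≤ α C k + E 0` keeps `C` below `C 0`, hence `E` is bounded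
below and converges, and therefore `Δ → 0`. Thus `C (k+1) - α C k` converges, and since `α < 1` so
does `C` (`tendsto_zero_of_contraction`).
-/


open RealInnerProductSpace Filter

/-- A contractive linear recursion with vanishing forcing term has vanishing solutions. -/
lemma tendsto_zero_of_contraction {α : ℝ} (hα0 : 0 ≤ α) (hα1 : α < 1) (v : ℕ → ℝ)
    (h : Tendsto (fun k => v (k + 1) - α * v k) atTop (nhds 0)) :
    Tendsto v atTop (nhds 0) := by
  rw [Metric.tendsto_atTop] at h ⊢
  intro δ hδ
  obtain ⟨N, hN⟩ := h (δ / 2 * (1 - α)) (by have : 0 < 1 - α := by linarith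
                                            positivity)
  have key : ∀ n, |v (N + n)| ≤ δ / 2 + α ^ n * |v N| := by
    intro n
    induction n with
    | zero => simp; linarith
    | succ n ih =>
      have h1 := hN (N + n) (by omega)
      rw [Real.dist_eq, sub_zero] at h1
      have h2 : |v (N + n + 1)| ≤ |v (N + n + 1) - α * v (N + n)| + α * |v (N + n)| := by
        have := abs_add_le (v (N + n + 1) - α * v (N + n)) (α * v (N + n))
        rwa [sub_add_cancel, abs_mul, abs_of_nonneg hα0] at this
      have h3 := mul_le_mul_of_nonneg_left ih hα0
      rw [← add_assoc, pow_succ]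
      linarith
  have hp : Tendsto (fun n => α ^ n * |v N|) atTop (nhds 0) := by
    simpa using (tendsto_pow_atTop_nhds_zero_of_lt_one hα0 hα1).mul_const |v N|
  obtain ⟨M, hM⟩ := eventually_atTop.1 (hp.eventually_lt_const (half_pos hδ))
  refine ⟨N + M, fun n hn => ?_⟩
  obtain ⟨m, rfl⟩ : ∃ m, n = N + m := ⟨n - N, by omega⟩
  have := hM m (by omega)
  have := key m
  rw [Real.dist_eq, sub_zero]
  linarith

/-- Convergence of a nonnegative sequence `c` whose inertial energy `c (k+1) - α c k + a d k`
dissipates at least `(b - a) d (k+1)` at each step. -/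
lemma exists_limit_of_inertial_energy {α a b : ℝ} (hα0 : 0 ≤ α) (hα1 : α < 1) (ha : 0 ≤ a)
    (hab : a < b) (c d : ℕ → ℝ) (hc : ∀ k, 0 ≤ c k) (hd : ∀ k, 0 ≤ d k) (hd0 : d 0 = 0)
    (hc01 : c 0 = c 1)
    (h : ∀ k, c (k + 2) - α * c (k + 1) + b * d (k + 1) ≤ c (k + 1) - α * c k + a * d k) :
    ∃ l, Tendsto c atTop (nhds l) := by
  set E : ℕ → ℝ := fun k => c (k + 1) - α * c k + a * d k with hE
  have hdec : ∀ k, E (k + 1) + (b - a) * d (k + 1) ≤ E k := fun k => by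
    have := h k
    simp only [hE, add_assoc, Nat.reduceAdd] at this ⊢
    linarith
  have hanti : Antitone E := antitone_nat_of_succ_le fun k => by
    have := hdec k
    have := mul_nonneg (sub_nonneg.2 hab.le) (hd (k + 1))
    linarith
  have hE0 : E 0 = (1 - α) * c 0 := by
    simp only [hE, zero_add, hd0, ← hc01]; ring
  have hbd : ∀ k, c k ≤ c 0 := by
    intro k
    induction k with
    | zero => exact le_rfl
    | succ k ih =>
      have h1 : c (k + 1) - α * c k + a * d k ≤ (1 - α) * c 0 := hE0 ▸ hanti (Nat.zero_le k)
      have h2 := mul_nonneg ha (hd k)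
      have h3 := mul_le_mul_of_nonneg_left ih hα0
      linarith
  have hbelow : BddBelow (Set.range E) := by
    refine ⟨-(α * c 0), ?_⟩
    rintro _ ⟨k, rfl⟩
    have h1 := hc (k + 1)
    have h2 := mul_nonneg ha (hd k)
    have h3 := mul_le_mul_of_nonneg_left (hbd k) hα0
    simp only [hE]
    linarith
  obtain ⟨e, he⟩ : ∃ e, Tendsto E atTop (nhds e) := ⟨_, tendsto_atTop_ciInf hanti hbelow⟩
  have hba : 0 < b - a := sub_pos.2 hab
  have hdlim : Tendsto d atTop (nhds 0) := by
    rw [← tendsto_add_atTop_iff_nat 1]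
    have hlim : Tendsto (fun k => (E k - E (k + 1)) / (b - a)) atTop (nhds 0) := by
      simpa using (he.sub ((tendsto_add_atTop_iff_nat 1).2 he)).div_const (b - a)
    refine squeeze_zero (fun k => hd (k + 1)) (fun k => ?_) hlim
    rw [le_div_iff₀ hba]
    linarith [hdec k]
  refine ⟨e / (1 - α), ?_⟩
  rw [← tendsto_sub_nhds_zero_iff]
  apply tendsto_zero_of_contraction hα0 hα1
  have hw : Tendsto (fun k => E k - a * d k - e) atTop (nhds 0) := by
    simpa using (he.sub (hdlim.const_mul a)).sub_const e
  refine hw.congr fun k => ?_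
  have : 1 - α ≠ 0 := by linarith
  simp only [hE]
  field_simp
  ring

/-- One-step energy inequality, with `u = z (k+1) - zstar`, `v = z (k+1) - z k` and
`t = T (y (k+1))`, so that `z (k+2) - z (k+1) = α • v - ρ • t` and `z k - zstar = u - v`. -/
lemma inertial_energy_step {H : Type*} [NormedAddCommGroup H] [InnerProductSpace ℝ H]
    {α β ρ ν : ℝ} (hα0 : 0 ≤ α) (hρ0 : 0 ≤ ρ) (hν : 0 ≤ ν) (hρ : 2 * β = ρ * (1 + ν))
    (u v t : H) (h : β * ‖t‖ ^ 2 ≤ ⟪t, u + α • v⟫) :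
    ‖u + (α • v - ρ • t)‖ ^ 2 - α * ‖u‖ ^ 2 + ν * (1 - α) * ‖α • v - ρ • t‖ ^ 2 ≤
      ‖u‖ ^ 2 - α * ‖u - v‖ ^ 2 + (α * (1 + α) + ν * α * (1 - α)) * ‖v‖ ^ 2 := by
  have h1 : 0 ≤ ν * α * ‖(α • v - ρ • t) - v‖ ^ 2 := by positivity
  have h2 := mul_le_mul_of_nonneg_left h hρ0
  have h3 : ρ * (2 * β) * ‖t‖ ^ 2 = ρ * (ρ * (1 + ν)) * ‖t‖ ^ 2 := by rw [hρ]
  have e1 := real_inner_comm t u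
  have e2 := real_inner_comm t v
  have e3 : ‖α • v‖ ^ 2 = α ^ 2 * ‖v‖ ^ 2 := by rw [norm_smul, mul_pow, Real.norm_eq_abs, sq_abs]
  have e4 : ‖ρ • t‖ ^ 2 = ρ ^ 2 * ‖t‖ ^ 2 := by rw [norm_smul, mul_pow, Real.norm_eq_abs, sq_abs]
  simp only [norm_add_sq_real, norm_sub_sq_real, inner_add_right, inner_sub_right, inner_sub_left,
    real_inner_smul_left, real_inner_smul_right, real_inner_self_eq_norm_sq, e1, e2, e3, e4]
    at h1 h2 ⊢
  linarith

/-- Theorem 2(C): the limit `lim_{k→∞} ‖z^k − z⋆‖` exists. -/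
theorem inertial_KM_dist_converges
    {H : Type*} [NormedAddCommGroup H] [InnerProductSpace ℝ H]
    (α β lam ρ : ℝ) (hα0 : 0 < α) (hα1 : α < 1) (hβ : 0 < β) (hlam : 0 < lam)
    (hρ : ρ = 2 * lam * β)
    (T : H → H) (zstar : H) (hzstar : T zstar = 0)
    (z y : ℕ → H)
    (hy : ∀ k : ℕ, y (k + 1) = z (k + 1) + α • (z (k + 1) - z k))
    (hz : ∀ k : ℕ, z (k + 2) = y (k + 1) - ρ • T (y (k + 1)))
    (hcoco : ∀ k : ℕ, β * ‖T (y (k + 1))‖ ^ 2 ≤ ⟪T (y (k + 1)), y (k + 1) - zstar⟫)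
    (hz01 : z 0 = z 1)
    (hstep : lam * (1 - α + 2 * α ^ 2) < (1 - α) ^ 2) :
    ∃ L : ℝ, 0 ≤ L ∧ Tendsto (fun k : ℕ => ‖z k - zstar‖) atTop (nhds L) := by
  have hden : 0 < 1 - α + 2 * α ^ 2 := by nlinarith
  have hlam1 : lam < 1 := by nlinarith
  set ν : ℝ := lam⁻¹ - 1 with hνdef
  have hν : 0 < ν := sub_pos.2 ((one_lt_inv₀ hlam).2 hlam1)
  have hlν : lam * (1 + ν) = 1 := by
    rw [hνdef]; field_simp; ring
  have hab : α * (1 + α) + ν * α * (1 - α) < ν * (1 - α) := by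
    -- Multiplied by `lam`, with `lam * ν = 1 - lam`, this is the step-size condition.
    refine lt_of_mul_lt_mul_left (a := lam) ?_ hlam.le
    have e : lam * ν = 1 - lam := by linarith
    have e1 : lam * (ν * (1 - α)) = (1 - lam) * (1 - α) := by rw [← e]; ring
    have e2 : lam * (α * (1 + α) + ν * α * (1 - α)) =
        lam * α * (1 + α) + (1 - lam) * α * (1 - α) := by rw [← e]; ring
    rw [e1, e2]
    nlinarith
  have ha : 0 ≤ α * (1 + α) + ν * α * (1 - α) := by
    have : 0 < 1 - α := by linarith
    positivity
  obtain ⟨l, hl⟩ := exists_limit_of_inertial_energy hα0.le hα1 ha hab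
    (fun k => ‖z k - zstar‖ ^ 2) (fun k => ‖z (k + 1) - z k‖ ^ 2)
    (fun k => by positivity) (fun k => by positivity) (by simp [hz01]) (by simp [hz01])
    (fun k => by
      have hco := hcoco k
      rw [show y (k + 1) - zstar = (z (k + 1) - zstar) + α • (z (k + 1) - z k) by
        rw [hy k]; abel] at hco
      have hstep' := inertial_energy_step hα0.le (by rw [hρ]; positivity : 0 ≤ ρ) hν.le
        (by rw [hρ]; linear_combination -2 * β * hlν) _ _ _ hco
      have hd : α • (z (k + 1) - z k) - ρ • T (y (k + 1)) = z (k + 2) - z (k + 1) := by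
        rw [hz k, hy k]; abel
      rw [hd, show z (k + 1) - zstar + (z (k + 2) - z (k + 1)) = z (k + 2) - zstar by abel,
        show z (k + 1) - zstar - (z (k + 1) - z k) = z k - zstar by abel] at hstep'
      exact hstep')
  refine ⟨√l, Real.sqrt_nonneg l, ?_⟩
  simpa [Real.sqrt_sq (norm_nonneg _)] using hl.sqrt
end

section
/- Lemma S1: under the inertial Krasnoselskii–Mann iteration with cocoercivity-type condition, for every k ≥ 1 one has (‖z^{k+1} − z⋆‖² − ‖z^k − z⋆‖²) + ν·(1 − α)·‖z^{k+1} − z^k‖² + ν·α·‖z^{k+1} − 2·z^k + z^{k−1}‖² ≤ α·(‖z^k − z⋆‖² − ‖z^{k−1} − z⋆‖²) + (α·(1 + α) + ν·α·(1 − α))·‖z^k − z^{k−1}‖². -/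
/-! With `t = T (y (k + 1))` and `d = z (k + 1) - z k`, cocoercivity and `ρ² (1 + ν) = 2 ρ β` give the
descent estimate `‖z (k + 2) - zstar‖² ≤ ‖y (k + 1) - zstar‖² - ν ρ² ‖t‖²`. Both sides are then rewritten
by the convexity identity `‖(1 - α) a + α b‖² = (1 - α) ‖a‖² + α ‖b‖² - α (1 - α) ‖a - b‖²`: applied
to `a = z (k + 2) - z (k + 1)` and `b = a - d` it evaluates `‖ρ t‖²`, and its extrapolation form (`-α`
in place of `α`) evaluates `‖y (k + 1) - zstar‖²`. Below, these identities amount to expanding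
everything in the inner products of `z (k + 1) - zstar`, `d` and `t`. -/

open RealInnerProductSpace

/-- Lemma S1: the key per-step inequality for the inertial KM iteration. -/
theorem inertial_KM_lemma_S1
    {H : Type*} [NormedAddCommGroup H] [InnerProductSpace ℝ H]
    (α β lam ρ ν : ℝ) (hα0 : 0 < α) (hα1 : α < 1) (hβ : 0 < β) (hlam : 0 < lam)
    (hρ : ρ = 2 * lam * β) (hν : ν = lam⁻¹ - 1)
    (T : H → H) (zstar : H) (hzstar : T zstar = 0)
    (z y : ℕ → H)
    (hy : ∀ k : ℕ, y (k + 1) = z (k + 1) + α • (z (k + 1) - z k))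
    (hz : ∀ k : ℕ, z (k + 2) = y (k + 1) - ρ • T (y (k + 1)))
    (hcoco : ∀ k : ℕ, β * ‖T (y (k + 1))‖ ^ 2 ≤ ⟪T (y (k + 1)), y (k + 1) - zstar⟫) :
    ∀ k : ℕ,
      (‖z (k + 2) - zstar‖ ^ 2 - ‖z (k + 1) - zstar‖ ^ 2)
        + ν * (1 - α) * ‖z (k + 2) - z (k + 1)‖ ^ 2
        + ν * α * ‖z (k + 2) - (2 : ℝ) • z (k + 1) + z k‖ ^ 2
      ≤ α * (‖z (k + 1) - zstar‖ ^ 2 - ‖z k - zstar‖ ^ 2)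
        + (α * (1 + α) + ν * α * (1 - α)) * ‖z (k + 1) - z k‖ ^ 2 := by
  intro k
  have hc := hcoco k
  obtain ⟨t, ht⟩ : ∃ t, t = T (y (k + 1)) := ⟨_, rfl⟩
  obtain ⟨c, hcdef⟩ : ∃ c, c = z (k + 1) - zstar := ⟨_, rfl⟩
  obtain ⟨d, hd⟩ : ∃ d, d = z (k + 1) - z k := ⟨_, rfl⟩
  have e1 : y (k + 1) - zstar = c + α • d := by
    rw [hy, hcdef, hd]; abel
  have e2 : z (k + 2) - zstar = c + α • d - ρ • t := by
    rw [hz, ← ht, ← e1]; abel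
  have e3 : z (k + 2) - z (k + 1) = α • d - ρ • t := by
    rw [hz, ← ht, hy, hd]; abel
  have e4 : z (k + 2) - (2 : ℝ) • z (k + 1) + z k = α • d - ρ • t - d := by
    rw [← e3, hd, two_smul]; abel
  have e5 : z k - zstar = c - d := by
    rw [hcdef, hd]; abel
  rw [← ht, e1] at hc
  rw [e2, e3, e4, e5, ← hcdef, ← hd]
  have hstep : ρ ^ 2 * (1 + ν) = 2 * ρ * β := by
    rw [hν, hρ]; field_simp; ring
  have hρ0 : 0 ≤ ρ := by rw [hρ]; positivity
  have hdescent := mul_le_mul_of_nonneg_left hc hρ0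
  have hstep' := congrArg (· * ⟪t, t⟫) hstep
  simp only [← real_inner_self_eq_norm_sq, inner_add_left, inner_add_right, inner_sub_left,
    inner_sub_right, real_inner_smul_left, real_inner_smul_right, real_inner_comm c d,
    real_inner_comm c t, real_inner_comm d t] at hdescent hstep' ⊢
  linarith
end

section
/- Intermediate inequality (S12) in the proof of Lemma S1: under the inertial Krasnoselskii–Mann iteration with cocoercivity-type condition, for every k ≥ 1, ‖z^{k+1} − z⋆‖² − ‖z^k − z⋆‖² ≤ α·(‖z^k − z⋆‖² − ‖z^{k−1} − z⋆‖²) + α·(1 + α)·‖z^k − z^{k−1}‖² − ρ·(2β − ρ)·‖T(y^k)‖². -/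
/-! The step `z (k + 2) = y (k + 1) - ρ • T (y (k + 1))` is expanded around `zstar`; the cross term
`-2ρ ⟪T y, y - zstar⟫` is bounded by `-2ρβ ‖T y‖ ^ 2` through cocoercivity and `ρ ≥ 0`. The remaining
`‖y - zstar‖ ^ 2` is evaluated exactly by `norm_sq_extrapolation`. -/

open RealInnerProductSpace

/-- Affine combination identity for the inertial point: with weights `1 + α` and `-α`, the squared
norm of a combination differs from the combination of squared norms by a multiple of
`‖a - b‖ ^ 2`. -/
theorem norm_sq_extrapolation {H : Type*} [NormedAddCommGroup H] [InnerProductSpace ℝ H]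
    (α : ℝ) (a b : H) :
    ‖a + α • (a - b)‖ ^ 2
      = (1 + α) * ‖a‖ ^ 2 - α * ‖b‖ ^ 2 + α * (1 + α) * ‖a - b‖ ^ 2 := by
  rw [norm_add_sq_real, norm_smul, mul_pow, Real.norm_eq_abs, sq_abs, inner_smul_right,
    inner_sub_right, real_inner_self_eq_norm_sq, norm_sub_sq_real]
  ring

/-- Intermediate inequality (S12) in the proof of Lemma S1. -/
theorem inertial_KM_ineq_S12
    {H : Type*} [NormedAddCommGroup H] [InnerProductSpace ℝ H]
    (α β lam ρ ν : ℝ) (hα0 : 0 < α) (hα1 : α < 1) (hβ : 0 < β) (hlam : 0 < lam)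
    (hρ : ρ = 2 * lam * β) (hν : ν = lam⁻¹ - 1)
    (T : H → H) (zstar : H) (hzstar : T zstar = 0)
    (z y : ℕ → H)
    (hy : ∀ k : ℕ, y (k + 1) = z (k + 1) + α • (z (k + 1) - z k))
    (hz : ∀ k : ℕ, z (k + 2) = y (k + 1) - ρ • T (y (k + 1)))
    (hcoco : ∀ k : ℕ, β * ‖T (y (k + 1))‖ ^ 2 ≤ ⟪T (y (k + 1)), y (k + 1) - zstar⟫) :
    ∀ k : ℕ,
      ‖z (k + 2) - zstar‖ ^ 2 - ‖z (k + 1) - zstar‖ ^ 2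
      ≤ α * (‖z (k + 1) - zstar‖ ^ 2 - ‖z k - zstar‖ ^ 2)
        + α * (1 + α) * ‖z (k + 1) - z k‖ ^ 2
        - ρ * (2 * β - ρ) * ‖T (y (k + 1))‖ ^ 2 := by
  intro k
  have hρ0 : 0 ≤ ρ := by rw [hρ]; positivity
  have hstep : ‖z (k + 2) - zstar‖ ^ 2 = ‖y (k + 1) - zstar‖ ^ 2
      - 2 * ρ * ⟪T (y (k + 1)), y (k + 1) - zstar⟫ + ρ ^ 2 * ‖T (y (k + 1))‖ ^ 2 := by
    rw [hz k, sub_right_comm, norm_sub_sq_real, norm_smul, mul_pow, Real.norm_eq_abs, sq_abs,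
      inner_smul_right, real_inner_comm]
    ring
  have hinertia := norm_sq_extrapolation α (z (k + 1) - zstar) (z k - zstar)
  rw [sub_sub_sub_cancel_right, sub_add_eq_add_sub, ← hy k] at hinertia
  linarith [mul_le_mul_of_nonneg_left (hcoco k) hρ0]
end

section
/- Lyapunov decrease inequality (S20) in the proof of Theorem 2: define δ^k := ν·(1 − α)·‖z^k − z^{k−1}‖² and C^k := ‖z^k − z⋆‖² − α·‖z^{k−1} − z⋆‖² + δ^k for k ≥ 1. If ε > 0 is a real number with α·(1 + α) + ν·α·(1 − α) ≤ ν·(1 − α) − ε, then for every k ≥ 1, C^{k+1} + ν·α·‖z^{k+1} − 2·z^k + z^{k−1}‖² + ε·‖z^k − z^{k−1}‖² ≤ C^k. -/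
/-!
Write `a = z^k - z⋆`, `d = z^k - z^{k-1}`, `e = z^{k+1} - z^k`, so that `y^k - z⋆ = a + α d` and
`ρ T(y^k) = α d - e`. Expanding `z^{k+1} - z⋆ = (a + α d) - ρ T(y^k)`, cocoercivity and the
choice `ρ = 2λβ` give (`norm_sub_smul_sq_le_of_cocoercive`)
`‖z^{k+1} - z⋆‖² ≤ ‖a + α d‖² - ν ‖e - α d‖²`.
Both squares on the right are of affine combinations and can be rewritten exactly
(`norm_add_smul_sq`, `norm_sub_smul_sq`); this produces the terms of `C^k`, `C^{k+1}` and
`ν α ‖e - d‖²`, together with `(α (1 + α) + ν α (1 - α)) ‖d‖²`, which the condition on `ε` bounds.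
-/

open RealInnerProductSpace

/-- The square of the extrapolation `(1 + α) a - α (a - d)`. -/
lemma norm_add_smul_sq {H : Type*} [NormedAddCommGroup H] [InnerProductSpace ℝ H]
    (α : ℝ) (a d : H) :
    ‖a + α • d‖ ^ 2 = (1 + α) * ‖a‖ ^ 2 - α * ‖a - d‖ ^ 2 + α * (1 + α) * ‖d‖ ^ 2 := by
  rw [norm_add_sq_real, norm_sub_sq_real, real_inner_smul_right, norm_smul, mul_pow,
    Real.norm_eq_abs, sq_abs]
  ring

/-- The square of the convex combination `(1 - α) e + α (e - d)`. -/
lemma norm_sub_smul_sq {H : Type*} [NormedAddCommGroup H] [InnerProductSpace ℝ H]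
    (α : ℝ) (e d : H) :
    ‖e - α • d‖ ^ 2 = (1 - α) * ‖e‖ ^ 2 + α * ‖e - d‖ ^ 2 - α * (1 - α) * ‖d‖ ^ 2 := by
  rw [norm_sub_sq_real, norm_sub_sq_real, real_inner_smul_right, norm_smul, mul_pow,
    Real.norm_eq_abs, sq_abs]
  ring

/-- One relaxed step along a cocoercive direction `t`, where `w` is the offset from the zero:
the squared distance drops by at least `(λ⁻¹ - 1) ‖ρ t‖²` when `ρ = 2λβ`. -/
lemma norm_sub_smul_sq_le_of_cocoercive {H : Type*} [NormedAddCommGroup H]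
    [InnerProductSpace ℝ H] {β lam : ℝ} (hβ : 0 < β) (hlam : 0 < lam) {t w : H}
    (h : β * ‖t‖ ^ 2 ≤ ⟪t, w⟫) :
    ‖w - (2 * lam * β) • t‖ ^ 2 ≤ ‖w‖ ^ 2 - (lam⁻¹ - 1) * ‖(2 * lam * β) • t‖ ^ 2 := by
  rw [norm_sub_sq_real, real_inner_smul_right, norm_smul, mul_pow, Real.norm_eq_abs, sq_abs,
    real_inner_comm]
  have h₁ : 2 * (2 * lam * β) * (β * ‖t‖ ^ 2) ≤ 2 * (2 * lam * β) * ⟪t, w⟫ :=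
    mul_le_mul_of_nonneg_left h (by positivity)
  have h₂ : lam⁻¹ * ((2 * lam * β) ^ 2 * ‖t‖ ^ 2) = 2 * (2 * lam * β) * (β * ‖t‖ ^ 2) := by
    field_simp
  linarith

/-- Lyapunov decrease inequality (S20) in the proof of Theorem 2, with
`δ^k = ν (1−α) ‖z^k − z^{k−1}‖²` and
`C^k = ‖z^k − z⋆‖² − α ‖z^{k−1} − z⋆‖² + δ^k`. -/
theorem inertial_KM_lyapunov_decrease
    {H : Type*} [NormedAddCommGroup H] [InnerProductSpace ℝ H]
    (α β lam ρ ν : ℝ) (hα0 : 0 < α) (hα1 : α < 1) (hβ : 0 < β) (hlam : 0 < lam)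
    (hρ : ρ = 2 * lam * β) (hν : ν = lam⁻¹ - 1)
    (T : H → H) (zstar : H) (hzstar : T zstar = 0)
    (z y : ℕ → H)
    (hy : ∀ k : ℕ, y (k + 1) = z (k + 1) + α • (z (k + 1) - z k))
    (hz : ∀ k : ℕ, z (k + 2) = y (k + 1) - ρ • T (y (k + 1)))
    (hcoco : ∀ k : ℕ, β * ‖T (y (k + 1))‖ ^ 2 ≤ ⟪T (y (k + 1)), y (k + 1) - zstar⟫)
    (ε : ℝ) (hε : 0 < ε)
    (hεbound : α * (1 + α) + ν * α * (1 - α) ≤ ν * (1 - α) - ε) :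
    ∀ k : ℕ,
      (‖z (k + 2) - zstar‖ ^ 2 - α * ‖z (k + 1) - zstar‖ ^ 2
          + ν * (1 - α) * ‖z (k + 2) - z (k + 1)‖ ^ 2)
        + ν * α * ‖z (k + 2) - (2 : ℝ) • z (k + 1) + z k‖ ^ 2
        + ε * ‖z (k + 1) - z k‖ ^ 2
      ≤ ‖z (k + 1) - zstar‖ ^ 2 - α * ‖z k - zstar‖ ^ 2
          + ν * (1 - α) * ‖z (k + 1) - z k‖ ^ 2 := by
  intro k
  subst hρ hν
  have hstep := norm_sub_smul_sq_le_of_cocoercive hβ hlam (hcoco k)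
  have hz' : y (k + 1) - zstar - (2 * lam * β) • T (y (k + 1)) = z (k + 2) - zstar := by
    rw [hz k]; abel
  have hy' : y (k + 1) - zstar = (z (k + 1) - zstar) + α • (z (k + 1) - z k) := by
    rw [hy k]; abel
  have ht : (2 * lam * β) • T (y (k + 1))
      = -((z (k + 2) - z (k + 1)) - α • (z (k + 1) - z k)) := by
    have h : (2 * lam * β) • T (y (k + 1)) = y (k + 1) - z (k + 2) := by rw [hz k]; abel
    rw [h, hy k]; abel
  have hprev : z (k + 1) - zstar - (z (k + 1) - z k) = z k - zstar := by abel
  have hsecond : z (k + 2) - z (k + 1) - (z (k + 1) - z k)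
      = z (k + 2) - (2 : ℝ) • z (k + 1) + z k := by
    rw [two_smul]; abel
  rw [hz', hy', ht, norm_neg, norm_add_smul_sq, norm_sub_smul_sq, hprev, hsecond] at hstep
  have hbound := mul_le_mul_of_nonneg_right hεbound (sq_nonneg ‖z (k + 1) - z k‖)
  linarith
end

section
/- Nonnegativity of the Lyapunov sequence (step in the proof of Theorem 2, stated as a general real-sequence lemma): let a, δ : ℕ → ℝ with a_k ≥ 0 and δ_k ≥ 0 for all k, let α be a real number with 0 ≤ α ≤ 1, and define C_k := a_k − α·a_{k−1} + δ_k for k ≥ 1. If the sequence (C_k)_{k≥1} is nonincreasing, then C_k ≥ 0 for every k ≥ 1. -/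
/-!
If some `C_m` equals `-c < 0`, monotonicity gives `C_j ≤ -c` for all `j ≥ m`, that is,
`a_j ≤ α a_{j-1} - δ_j - c ≤ a_{j-1} - c`, since `δ_j ≥ 0`, `α ≤ 1` and `a_{j-1} ≥ 0`.
Thus `a` drops by at least `c` at every step from `m` on, and by the Archimedean property
it eventually becomes negative, contradicting `a ≥ 0`.
-/

/-- Nonnegativity of the Lyapunov sequence `C_k = a_k − α a_{k−1} + δ_k`
(`k ≥ 1`): if `(C_k)_{k≥1}` is nonincreasing, then `C_k ≥ 0` for all `k ≥ 1`. -/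
theorem lyapunov_nonneg
    (a δ : ℕ → ℝ) (ha : ∀ k, 0 ≤ a k) (hδ : ∀ k, 0 ≤ δ k)
    (α : ℝ) (hα0 : 0 ≤ α) (hα1 : α ≤ 1)
    (hmono : ∀ k : ℕ,
      a (k + 2) - α * a (k + 1) + δ (k + 2) ≤ a (k + 1) - α * a k + δ (k + 1)) :
    ∀ k : ℕ, 0 ≤ a (k + 1) - α * a k + δ (k + 1) := by
  intro k
  by_contra! hneg
  have hC : ∀ n : ℕ, a (k + n + 1) - α * a (k + n) + δ (k + n + 1)
      ≤ a (k + 1) - α * a k + δ (k + 1) := by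
    intro n
    induction n with
    | zero => exact le_refl _
    | succ n ih => exact (hmono (k + n)).trans ih
  have hdecr : ∀ n : ℕ, a (k + n) ≤ a k + n * (a (k + 1) - α * a k + δ (k + 1)) := by
    intro n
    induction n with
    | zero => simp
    | succ n ih =>
      have h1 := hC n
      have h2 := hδ (k + n + 1)
      have h3 : α * a (k + n) ≤ a (k + n) := mul_le_of_le_one_left (ha _) hα1
      rw [← add_assoc]
      push_cast
      linarith
  obtain ⟨n, hn⟩ := exists_lt_nsmul (neg_pos.mpr hneg) (a k)
  rw [nsmul_eq_mul] at hn
  linarith [hdecr n, ha (k + n)]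
end

section
/- Quantitative bound (S21) in the proof of Theorem 2: set ε := ν·(1 − α) − α·(1 + α) − ν·α·(1 − α) (which is positive by the step-size condition). Then ε · Σ_{k=1}^∞ ‖z^k − z^{k−1}‖² ≤ ‖z^1 − z⋆‖²; in particular the sequence k ↦ ‖z^k − z^{k−1}‖² is summable. -/
open RealInnerProductSpace

/-!
Write `a k = ‖z k - z⋆‖²` and `d k = ‖z (k+1) - z k‖²`. Cocoercivity together with `ρ = 2λβ` gives
`a (k+2) ≤ ‖y (k+1) - z⋆‖² - ν ‖z (k+2) - y (k+1)‖²`. Expanding the first square, and bounding the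
second below by `(1-α) d (k+1) - α (1-α) d k`, yields the recursion of `inertial_step`. It says that
the Lyapunov quantity `a (k+1) - α a k + ν (1-α) d k` decreases by at least `ε d k` at each step,
starting from the value `(1-α) a 1`. The resulting inequality `a (n+1) ≤ α a n + (1-α) a 1` shows
`a n ≤ a 1` for all `n`, so every partial sum satisfies `ε ∑ d ≤ (1-α) a 1 + α a n ≤ a 1`
(`partial_sum_bound`).
-/

/-- One step of the inertial iteration, with `u = z (k+1) - z⋆`, `w = z (k+1) - z k` and
`t = T (y (k+1))`: then `u - w = z k - z⋆`, `u + α w = y (k+1) - z⋆`,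
`u + α w - ρ t = z (k+2) - z⋆` and `α w - ρ t = z (k+2) - z (k+1)`. -/
lemma inertial_step {H : Type*} [NormedAddCommGroup H] [InnerProductSpace ℝ H]
    {α β lam ρ ν : ℝ} (hα0 : 0 < α) (hβ : 0 < β) (hlam : 0 < lam)
    (hρ : ρ = 2 * lam * β) (hν : ν = lam⁻¹ - 1) (hν0 : 0 ≤ ν) (u w t : H)
    (hco : β * ‖t‖ ^ 2 ≤ ⟪t, u + α • w⟫) :
    ‖u + α • w - ρ • t‖ ^ 2 - α * ‖u‖ ^ 2 + ν * (1 - α) * ‖α • w - ρ • t‖ ^ 2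
      ≤ ‖u‖ ^ 2 - α * ‖u - w‖ ^ 2 + (α * (1 + α) + ν * α * (1 - α)) * ‖w‖ ^ 2 := by
  have hρ0 : 0 < ρ := by rw [hρ]; positivity
  have hco' := mul_le_mul_of_nonneg_left hco (by positivity : 0 ≤ 2 * ρ)
  have hcoef : 2 * ρ * β = (ν + 1) * ρ ^ 2 := by
    rw [hν, hρ]; field_simp; ring
  -- The slack in `‖x - α w‖² ≥ (1 - α) ‖x‖² - α (1 - α) ‖w‖²` is `α ‖x - w‖²`.
  have hsq : 0 ≤ ν * α * ‖(α • w - ρ • t) - w‖ ^ 2 := by positivity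
  have hkey : 2 * ρ * (β * ‖t‖ ^ 2) = (ν + 1) * ρ ^ 2 * ‖t‖ ^ 2 := by
    rw [← hcoef]; ring
  rw [hkey] at hco'
  simp only [← real_inner_self_eq_norm_sq, inner_add_left, inner_add_right, inner_sub_left,
    inner_sub_right, real_inner_smul_left, real_inner_smul_right] at hco' hsq ⊢
  rw [real_inner_comm u w, real_inner_comm u t, real_inner_comm w t] at *
  linarith

/-- The scalar recursion: the Lyapunov quantity `a (k+1) - α a k + c d k` drops by at least
`(c - b) d k` at each step, which bounds the partial sums of `d`. -/
lemma partial_sum_bound {α b c : ℝ} (hα0 : 0 < α) (hc : 0 ≤ c) (hbc : 0 ≤ c - b)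
    {a d : ℕ → ℝ} (hd : ∀ k, 0 ≤ d k) (hd0 : d 0 = 0) (ha0 : a 0 = a 1)
    (hrec : ∀ k, a (k + 2) - α * a (k + 1) + c * d (k + 1) ≤ a (k + 1) - α * a k + b * d k)
    (ha : ∀ k, 0 ≤ a k) (n : ℕ) :
    (c - b) * ∑ i ∈ Finset.range n, d i ≤ a 1 := by
  have hlyap : ∀ n, a (n + 1) - α * a n + c * d n + (c - b) * ∑ i ∈ Finset.range n, d i
      ≤ (1 - α) * a 1 := by
    intro n
    induction n with
    | zero => simp only [zero_add, Finset.range_zero, Finset.sum_empty, hd0, ha0]; linarith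
    | succ n ih => rw [Finset.sum_range_succ]; linarith [hrec n]
  have hsum : ∀ n, 0 ≤ (c - b) * ∑ i ∈ Finset.range n, d i := fun n =>
    mul_nonneg hbc (Finset.sum_nonneg fun i _ => hd i)
  have hbdd : ∀ n, a n ≤ a 1 := by
    intro n
    induction n with
    | zero => exact ha0.le
    | succ n ih =>
      linarith [hlyap n, hsum n, mul_nonneg hc (hd n), mul_le_mul_of_nonneg_left ih hα0.le]
  linarith [hlyap n, mul_nonneg hc (hd n), mul_le_mul_of_nonneg_left (hbdd n) hα0.le, ha (n + 1)]

/-- Quantitative bound (S21) in the proof of Theorem 2: with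
`ε = ν (1−α) − α (1+α) − ν α (1−α)`, one has
`ε ∑_{k=1}^∞ ‖z^k − z^{k−1}‖² ≤ ‖z^1 − z⋆‖²`, and in particular the sequence
of squared increments is summable. -/
theorem inertial_KM_increments_summable
    {H : Type*} [NormedAddCommGroup H] [InnerProductSpace ℝ H]
    (α β lam ρ ν : ℝ) (hα0 : 0 < α) (hα1 : α < 1) (hβ : 0 < β) (hlam : 0 < lam)
    (hρ : ρ = 2 * lam * β) (hν : ν = lam⁻¹ - 1)
    (T : H → H) (zstar : H) (hzstar : T zstar = 0)
    (z y : ℕ → H)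
    (hy : ∀ k : ℕ, y (k + 1) = z (k + 1) + α • (z (k + 1) - z k))
    (hz : ∀ k : ℕ, z (k + 2) = y (k + 1) - ρ • T (y (k + 1)))
    (hcoco : ∀ k : ℕ, β * ‖T (y (k + 1))‖ ^ 2 ≤ ⟪T (y (k + 1)), y (k + 1) - zstar⟫)
    (hz01 : z 0 = z 1)
    (hstep : lam * (1 - α + 2 * α ^ 2) < (1 - α) ^ 2) :
    Summable (fun k : ℕ => ‖z (k + 1) - z k‖ ^ 2) ∧
      (ν * (1 - α) - α * (1 + α) - ν * α * (1 - α))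
          * (∑' k : ℕ, ‖z (k + 1) - z k‖ ^ 2)
        ≤ ‖z 1 - zstar‖ ^ 2 := by
  have h1α : 0 < 1 - α := by linarith
  have hε : 0 < ν * (1 - α) - α * (1 + α) - ν * α * (1 - α) := by
    have h : 1 - α + 2 * α ^ 2 < lam⁻¹ * (1 - α) ^ 2 := by
      rwa [inv_mul_eq_div, lt_div_iff₀' hlam]
    rw [hν]; linarith
  have hν0 : 0 < ν := by
    have h : 0 < ν * (1 - α) ^ 2 := by nlinarith
    exact pos_of_mul_pos_left h (by positivity)
  have hrec : ∀ k, ‖z (k + 2) - zstar‖ ^ 2 - α * ‖z (k + 1) - zstar‖ ^ 2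
        + ν * (1 - α) * ‖z (k + 2) - z (k + 1)‖ ^ 2
      ≤ ‖z (k + 1) - zstar‖ ^ 2 - α * ‖z k - zstar‖ ^ 2
        + (α * (1 + α) + ν * α * (1 - α)) * ‖z (k + 1) - z k‖ ^ 2 := by
    intro k
    have e1 : y (k + 1) - zstar = z (k + 1) - zstar + α • (z (k + 1) - z k) := by
      rw [hy]; abel
    have e2 : z (k + 2) - zstar
        = z (k + 1) - zstar + α • (z (k + 1) - z k) - ρ • T (y (k + 1)) := by
      rw [← e1, hz]; abel
    have e3 : z (k + 2) - z (k + 1) = α • (z (k + 1) - z k) - ρ • T (y (k + 1)) := by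
      rw [← sub_sub_sub_cancel_right _ _ zstar, e2]; abel
    have e4 : z k - zstar = z (k + 1) - zstar - (z (k + 1) - z k) := by abel
    have hco := hcoco k
    rw [e1] at hco
    rw [e2, e3, e4]
    exact inertial_step hα0 hβ hlam hρ hν hν0.le _ _ _ hco
  have hb : ∀ n, ∑ i ∈ Finset.range n, ‖z (i + 1) - z i‖ ^ 2
      ≤ ‖z 1 - zstar‖ ^ 2 / (ν * (1 - α) - α * (1 + α) - ν * α * (1 - α)) := by
    intro n
    rw [le_div_iff₀' hε, sub_sub]
    exact partial_sum_bound (a := fun k => ‖z k - zstar‖ ^ 2)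
      (d := fun k => ‖z (k + 1) - z k‖ ^ 2) hα0 (by positivity) (by linarith)
      (fun k => by positivity) (by simp [hz01]) (by simp [hz01]) hrec (fun k => by positivity) n
  refine ⟨summable_of_sum_range_le (fun k => by positivity) hb, ?_⟩
  rw [← le_div_iff₀' hε]
  exact Real.tsum_le_of_sum_range_le (fun k => by positivity) hb
end

section
/- Geometric-decay positive-part lemma (equations S24–S26 in the proof of Theorem 2(C)): let s, δ : ℕ → ℝ be real sequences and α a real number with 0 ≤ α < 1. If δ_k ≥ 0 for all k, δ is summable, and s_{k+1} ≤ α·s_k + δ_k for all k, then the sequence of positive parts k ↦ max(s_k, 0) is summable. -/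
/-! The positive parts `p k = max (s k) 0` satisfy the same recursion
`p (k + 1) ≤ α * p k + δ k`, because `α` and `δ k` are nonnegative. Summing it bounds the partial
sums of `p` uniformly by `(p 0 + ∑' i, δ i) / (1 - α)`, which gives summability since `p ≥ 0`. -/

/-- Geometric-decay positive-part lemma (S24–S26): if `δ ≥ 0` is summable,
`0 ≤ α < 1` and `s (k+1) ≤ α s k + δ k` for all `k`, then the positive parts
`max (s k) 0` are summable. -/
theorem geometric_decay_pos_part_summable
    (s δ : ℕ → ℝ) (α : ℝ) (hα0 : 0 ≤ α) (hα1 : α < 1)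
    (hδ : ∀ k, 0 ≤ δ k) (hδsum : Summable δ)
    (hrec : ∀ k : ℕ, s (k + 1) ≤ α * s k + δ k) :
    Summable (fun k : ℕ => max (s k) 0) := by
  have hp0 : ∀ k, 0 ≤ max (s k) 0 := fun k => le_max_right _ _
  have hp : ∀ k, max (s (k + 1)) 0 ≤ α * max (s k) 0 + δ k := fun k =>
    max_le ((hrec k).trans (by gcongr; exact le_max_left _ _))
      (add_nonneg (mul_nonneg hα0 (hp0 k)) (hδ k))
  -- Telescoping `(1 - α) p k ≤ p k - p (k + 1) + δ k`, where `p k = max (s k) 0`.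
  have key : ∀ n, (1 - α) * ∑ i ∈ Finset.range n, max (s i) 0 + max (s n) 0
      ≤ max (s 0) 0 + ∑ i ∈ Finset.range n, δ i := by
    intro n
    induction n with
    | zero => simp
    | succ n ih =>
      rw [Finset.sum_range_succ, Finset.sum_range_succ]
      linarith [hp n]
  refine summable_of_sum_range_le (c := (max (s 0) 0 + ∑' i, δ i) / (1 - α)) hp0 fun n => ?_
  rw [le_div_iff₀' (sub_pos.2 hα1)]
  linarith [key n, hp0 n, hδsum.sum_le_tsum (Finset.range n) fun i _ => hδ i]
end

section
/- Remark 2 (optimal linear autoencoders satisfy E·D = I, Baldi–Hornik): let N, F be positive integers with F ≤ N, and let Σ be an N×N real symmetric positive-definite matrix whose N eigenvalues are distinct. If a pair of matrices D ∈ ℝ^{N×F}, E ∈ ℝ^{F×N} is a global minimizer over all such pairs of the reconstruction loss f(D, E) := trace((I_N − D·E) · Σ · (I_N − D·E)ᵀ) (which equals the expected loss 𝔼‖x − D·E·x‖² for a random vector x with 𝔼[x·xᵀ] = Σ), then E·D = I_F, the F×F identity matrix. -/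
/-!
The argument uses only the first-order conditions at a minimizer. Write `A = 1 - D E`.

* Varying `E` gives `Dᵀ A Σ = 0`, hence `Dᵀ A = 0` and `DᵀD (E D - 1) = 0`.
  If `D` is injective, then so is `DᵀD`, and `E D = 1`.
* Varying `D` gives `A Σ Eᵀ = 0`. If `D v = 0` for some `v ≠ 0`, then `D (E + v wᵀ) = D E`, so
  `(D, E + v wᵀ)` is a minimizer too, for every `w`. Subtracting the two conditions leaves
  `A Σ w vᵀ = 0` for all `w`, so `A = 0`, that is `D E = 1`. As `F ≤ N`, the matrices are then square
  and `E D = 1`.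
-/

open Matrix

/-- First-order condition for the quadratic form `A ↦ trace (A S Aᵀ)` along the line `A - t B`. -/
lemma trace_eq_zero_of_forall_le {m n : ℕ} {S : Matrix (Fin n) (Fin n) ℝ} (hS : S.IsSymm)
    {A B : Matrix (Fin m) (Fin n) ℝ}
    (h : ∀ t : ℝ, (A * S * Aᵀ).trace ≤ ((A - t • B) * S * (A - t • B)ᵀ).trace) :
    (A * S * Bᵀ).trace = 0 := by
  have hBA : (B * S * Aᵀ).trace = (A * S * Bᵀ).trace := by
    rw [← trace_transpose]
    simp [transpose_mul, hS.eq, Matrix.mul_assoc]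
  have hd := discrim_le_zero (a := (B * S * Bᵀ).trace) (b := -2 * (A * S * Bᵀ).trace) (c := 0) <| by
    intro t
    have ht := h t
    simp only [transpose_sub, transpose_smul, Matrix.sub_mul, Matrix.mul_sub, Matrix.smul_mul,
      Matrix.mul_smul, trace_sub, trace_smul, smul_eq_mul, hBA] at ht
    linarith
  unfold discrim at hd
  nlinarith

/-- Stationarity of the loss in the decoder. -/
lemma stationary_decoder {N F : ℕ} {S : Matrix (Fin N) (Fin N) ℝ} (hS : S.IsSymm)
    {D : Matrix (Fin N) (Fin F) ℝ} {E : Matrix (Fin F) (Fin N) ℝ}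
    (hmin : ∀ D' : Matrix (Fin N) (Fin F) ℝ,
      ((1 - D * E) * S * (1 - D * E)ᵀ).trace ≤ ((1 - D' * E) * S * (1 - D' * E)ᵀ).trace) :
    (1 - D * E) * S * Eᵀ = 0 := by
  set G := (1 - D * E) * S * Eᵀ with hG
  have h := trace_eq_zero_of_forall_le hS (A := 1 - D * E) (B := G * E) fun t => by
    have ht := hmin (D + t • G)
    rwa [Matrix.add_mul, Matrix.smul_mul, ← sub_sub] at ht
  rw [transpose_mul, ← Matrix.mul_assoc, ← hG] at h
  rw [← trace_mul_conjTranspose_self_eq_zero_iff, conjTranspose_eq_transpose_of_trivial]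
  exact h

/-- Stationarity of the loss in the encoder. -/
lemma stationary_encoder {N F : ℕ} {S : Matrix (Fin N) (Fin N) ℝ} (hS : S.IsSymm)
    {D : Matrix (Fin N) (Fin F) ℝ} {E : Matrix (Fin F) (Fin N) ℝ}
    (hmin : ∀ E' : Matrix (Fin F) (Fin N) ℝ,
      ((1 - D * E) * S * (1 - D * E)ᵀ).trace ≤ ((1 - D * E') * S * (1 - D * E')ᵀ).trace) :
    Dᵀ * ((1 - D * E) * S) = 0 := by
  set G := Dᵀ * ((1 - D * E) * S) with hG
  have h := trace_eq_zero_of_forall_le hS (A := 1 - D * E) (B := D * G) fun t => by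
    have ht := hmin (E + t • G)
    rwa [Matrix.mul_add, Matrix.mul_smul, ← sub_sub] at ht
  rw [transpose_mul, ← Matrix.mul_assoc, trace_mul_comm, ← Matrix.mul_assoc, ← hG] at h
  rw [← trace_mul_conjTranspose_self_eq_zero_iff, conjTranspose_eq_transpose_of_trivial]
  exact h

/-- Remark 2 (Baldi–Hornik): if `(D, E)` globally minimizes the linear
autoencoder reconstruction loss
`trace ((I − D E) Sigma (I − D E)ᵀ) = 𝔼 ‖x − D E x‖²` for a symmetric
positive-definite covariance `Sigma` with distinct eigenvalues, then `E D = I`. -/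
theorem linear_autoencoder_ED_eq_id
    (N F : ℕ) (hN : 0 < N) (hF : 0 < F) (hFN : F ≤ N)
    (Sigma : Matrix (Fin N) (Fin N) ℝ) (hsym : Sigma.IsSymm) (hpd : Sigma.PosDef)
    (hdistinct : Function.Injective hpd.isHermitian.eigenvalues)
    (D : Matrix (Fin N) (Fin F) ℝ) (E : Matrix (Fin F) (Fin N) ℝ)
    (hmin : ∀ (D' : Matrix (Fin N) (Fin F) ℝ) (E' : Matrix (Fin F) (Fin N) ℝ),
      Matrix.trace ((1 - D * E) * Sigma * (1 - D * E)ᵀ)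
        ≤ Matrix.trace ((1 - D' * E') * Sigma * (1 - D' * E')ᵀ)) :
    E * D = 1 := by
  have hdet : IsUnit Sigma.det := (isUnit_iff_isUnit_det _).1 hpd.isUnit
  by_cases hinj : ∀ v, D *ᵥ v = 0 → v = 0
  · have h1 := stationary_encoder hsym fun E' => hmin D E'
    have h2 : Dᵀ * (1 - D * E) = 0 := by
      have h := congrArg (· * Sigma⁻¹) h1
      simpa [← Matrix.mul_assoc, mul_nonsing_inv_cancel_right _ _ hdet] using h
    have h3 : Dᴴ * D * (E * D - 1) = 0 := by
      rw [conjTranspose_eq_transpose_of_trivial]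
      calc Dᵀ * D * (E * D - 1) = -(Dᵀ * (1 - D * E) * D) := by
            simp only [Matrix.mul_sub, Matrix.sub_mul, Matrix.mul_one, Matrix.mul_assoc]
            abel
        _ = 0 := by rw [h2]; simp
    rw [conjTranspose_mul_self_mul_eq_zero] at h3
    rw [← sub_eq_zero]
    refine ext_of_mulVec_single fun j => ?_
    rw [zero_mulVec]
    apply hinj
    rw [mulVec_mulVec, h3, zero_mulVec]
  · push Not at hinj
    obtain ⟨v, hDv, hv⟩ := hinj
    obtain ⟨k, hk⟩ := Function.ne_iff.1 hv
    have h1 := stationary_decoder hsym fun D' => hmin D' E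
    have h2 : (1 - D * E) * Sigma = 0 := by
      refine ext_of_mulVec_single fun j => ?_
      set w : Fin N → ℝ := Pi.single j 1
      have hDE : D * (E + vecMulVec v w) = D * E := by
        rw [Matrix.mul_add, mul_vecMulVec, hDv, zero_vecMulVec, add_zero]
      have h := stationary_decoder (D := D) (E := E + vecMulVec v w) hsym fun D' => by
        rw [hDE]
        exact hmin D' _
      rw [hDE, transpose_add, Matrix.mul_add, h1, zero_add, transpose_vecMulVec,
        mul_vecMulVec] at h
      ext i
      have hik := congrFun (congrFun h i) k
      rw [vecMulVec_apply] at hik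
      simpa using (mul_eq_zero.1 hik).resolve_right hk
    have h3 : D * E = 1 := by
      have h := congrArg (· * Sigma⁻¹) h2
      simp only [mul_nonsing_inv_cancel_right _ _ hdet, Matrix.zero_mul] at h
      exact (sub_eq_zero.1 h).symm
    have hNF : N ≤ F := by
      have h := rank_mul_le_left D E
      rw [h3, rank_one, Fintype.card_fin] at h
      exact h.trans (by simpa using rank_le_card_width D)
    obtain rfl := le_antisymm hFN hNF
    exact mul_eq_one_comm.1 h3
end
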